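/- Let X be a compact metric space and f : X → X a continuous map. Let 𝒜 be a finite collection of attractors of f which contains ∅ and Inv(X), is closed under binary union, and is closed under the operation (A, A') ↦ Inv(A ∩ A'). Then there exists a map k assigning to each A ∈ 𝒜 a subset k(A) ⊆ X such that: each k(A) is an attracting neighborhood with Inv(k(A)) = A; k(∅) = ∅ and k(Inv(X)) = X; and for all A, A' ∈ 𝒜, k(A ∪ A') = k(A) ∪ k(A') and k(Inv(A ∩ A')) = k(A) ∩ k(A'). In particular k is injective. -/

import Mathlib

open Set

/-- The maximal invariant set in `U`: the union of all subsets `S ⊆ U` with `f '' S = S`. -/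
def MaxInv {Y : Type*} (f : Y → Y) (U : Set Y) : Set Y :=
  ⋃₀ {S : Set Y | S ⊆ U ∧ f '' S = S}

/-- The maximal forward invariant set in `U`: the union of all subsets `S ⊆ U`
with `f '' S ⊆ S`. -/
def MaxInvPlus {Y : Type*} (f : Y → Y) (U : Set Y) : Set Y :=
  ⋃₀ {S : Set Y | S ⊆ U ∧ f '' S ⊆ S}

/-- The omega-limit set `ω(U) = ⋂_{n ≥ 0} cl (⋃_{m ≥ n} f^[m] '' U)`. -/
def OmegaLim {Y : Type*} [TopologicalSpace Y] (f : Y → Y) (U : Set Y) : Set Y :=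
  ⋂ n : ℕ, closure (⋃ m ≥ n, f^[m] '' U)

/-- The alpha-limit set `α(U) = ⋂_{n ≥ 0} cl (⋃_{m ≥ n} (f^[m]) ⁻¹' U)`. -/
def AlphaLim {Y : Type*} [TopologicalSpace Y] (f : Y → Y) (U : Set Y) : Set Y :=
  ⋂ n : ℕ, closure (⋃ m ≥ n, f^[m] ⁻¹' U)

/-- A trapping region: a forward invariant set `U` with `f^[n] '' cl U ⊆ int U`
for some `n ≥ 1`. -/
def IsTrappingRegion {Y : Type*} [TopologicalSpace Y] (f : Y → Y) (U : Set Y) : Prop :=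
  f '' U ⊆ U ∧ ∃ n : ℕ, 1 ≤ n ∧ f^[n] '' closure U ⊆ interior U

/-- An attractor: `A = Inv(U)` for some trapping region `U`. -/
def IsAttractor {Y : Type*} [TopologicalSpace Y] (f : Y → Y) (A : Set Y) : Prop :=
  ∃ U : Set Y, IsTrappingRegion f U ∧ A = MaxInv f U

/-- An attracting neighborhood: `ω(U) ⊆ int U`. -/
def IsAttractingNbhd {Y : Type*} [TopologicalSpace Y] (f : Y → Y) (U : Set Y) : Prop :=
  OmegaLim f U ⊆ interior U

/-- A repelling region: a backward invariant set `U` with `(f^[n]) ⁻¹' cl U ⊆ int U`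
for some `n ≥ 1`. -/
def IsRepellingRegion {Y : Type*} [TopologicalSpace Y] (f : Y → Y) (U : Set Y) : Prop :=
  f ⁻¹' U ⊆ U ∧ ∃ n : ℕ, 1 ≤ n ∧ f^[n] ⁻¹' closure U ⊆ interior U

/-- A repeller: `R = Inv⁺(U)` for some repelling region `U`. -/
def IsRepeller {Y : Type*} [TopologicalSpace Y] (f : Y → Y) (R : Set Y) : Prop :=
  ∃ U : Set Y, IsRepellingRegion f U ∧ R = MaxInvPlus f U

/-- A repelling neighborhood: `α(U) ⊆ int U`. -/
def IsRepellingNbhd {Y : Type*} [TopologicalSpace Y] (f : Y → Y) (U : Set Y) : Prop :=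
  AlphaLim f U ⊆ interior U

/-- A backward orbit: a sequence `γ : ℕ → Y` with `f (γ (k+1)) = γ k` for all `k`.
A backward orbit through `x` additionally satisfies `γ 0 = x`. -/
def IsBackwardOrbit {Y : Type*} (f : Y → Y) (γ : ℕ → Y) : Prop :=
  ∀ k : ℕ, f (γ (k + 1)) = γ k

/-- The orbital alpha-limit set `α_o(γ) = ⋂_{n ≥ 0} cl {γ m : m ≥ n}`. -/
def OrbAlpha {Y : Type*} [TopologicalSpace Y] (γ : ℕ → Y) : Set Y :=
  ⋂ n : ℕ, closure (γ '' {m : ℕ | n ≤ m})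

/-- The dual repeller of an attractor `A`: `A* = {x : ω(x) ∩ A = ∅}`. -/
def DualRepeller {Y : Type*} [TopologicalSpace Y] (f : Y → Y) (A : Set Y) : Set Y :=
  {x : Y | OmegaLim f {x} ∩ A = ∅}

/-- The dual attractor of a repeller `R`:
`R* = {x : ∃ backward orbit γ through x with α_o(γ) ∩ R = ∅}`. -/
def DualAttractor {Y : Type*} [TopologicalSpace Y] (f : Y → Y) (R : Set Y) : Set Y :=
  {x : Y | ∃ γ : ℕ → Y, γ 0 = x ∧ IsBackwardOrbit f γ ∧ OrbAlpha γ ∩ R = ∅}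

theorem aux_anti {X : Type*} [TopologicalSpace X] (f : X → X) (U : Set X) :
    Antitone (fun n : ℕ => closure (⋃ m ≥ n, f^[m] '' U)) := by
  intro a b hab
  apply closure_mono
  intro y hy
  simp only [mem_iUnion] at hy ⊢
  obtain ⟨m, hm, h⟩ := hy
  exact ⟨m, le_trans hab hm, h⟩

theorem aux_image {X : Type*} [MetricSpace X] [CompactSpace X] {f : X → X} (hf : Continuous f)
    (U : Set X) (n : ℕ) :
    f '' closure (⋃ m ≥ n, f^[m] '' U) = closure (⋃ m ≥ n + 1, f^[m] '' U) := by
  rw [← hf.isClosedMap.closure_image_eq_of_continuous hf]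
  congr 1
  ext y
  simp only [mem_image, mem_iUnion]
  constructor
  · rintro ⟨z, ⟨m, hm, u, hu, rfl⟩, rfl⟩
    exact ⟨m + 1, by omega, u, hu, Function.iterate_succ_apply' f m u⟩
  · rintro ⟨m, hm, u, hu, rfl⟩
    obtain ⟨m, rfl⟩ : ∃ k, m = k + 1 := ⟨m - 1, by omega⟩
    exact ⟨_, ⟨m, by omega, u, hu, rfl⟩, (Function.iterate_succ_apply' f m u).symm⟩

theorem aux_inv {X : Type*} [MetricSpace X] [CompactSpace X] {f : X → X} (hf : Continuous f)
    (U : Set X) : f '' OmegaLim f U = OmegaLim f U := by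
  apply Subset.antisymm
  · rintro _ ⟨y, hy, rfl⟩
    refine mem_iInter.2 fun n => ?_
    have h := aux_image hf U n
    have h2 : f y ∈ f '' closure (⋃ m ≥ n, f^[m] '' U) := mem_image_of_mem _ (mem_iInter.1 hy n)
    rw [h] at h2
    exact aux_anti f U (Nat.le_succ n) h2
  · intro y hy
    have hc : ∀ n, IsClosed (closure (⋃ m ≥ n, f^[m] '' U) ∩ f ⁻¹' {y}) := fun n =>
      isClosed_closure.inter (isClosed_singleton.preimage hf)
    have := IsCompact.nonempty_iInter_of_sequence_nonempty_isCompact_isClosed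
      (fun n => closure (⋃ m ≥ n, f^[m] '' U) ∩ f ⁻¹' {y})
      (fun n => inter_subset_inter_left _ (aux_anti f U (Nat.le_succ n)))
      (fun n => by
        have h2 := mem_iInter.1 hy (n + 1)
        rw [← aux_image hf U n] at h2
        obtain ⟨z, hz, h⟩ := h2
        exact ⟨z, hz, h⟩)
      (hc 0).isCompact hc
    obtain ⟨z, hz⟩ := this
    rw [mem_iInter] at hz
    exact ⟨z, mem_iInter.2 fun n => (hz n).1, (hz 0).2⟩

theorem aux_nonempty {X : Type*} [MetricSpace X] [CompactSpace X] (f : X → X) (x : X) :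
    (OmegaLim f {x}).Nonempty := by
  refine IsCompact.nonempty_iInter_of_sequence_nonempty_isCompact_isClosed _
    (fun n => aux_anti f {x} (Nat.le_succ n)) (fun n => ?_)
    isClosed_closure.isCompact (fun n => isClosed_closure)
  refine ⟨f^[n] x, subset_closure ?_⟩
  simp only [mem_iUnion]
  exact ⟨n, le_rfl, x, rfl, rfl⟩

/-- If the omega limit set meets an open set, the orbit meets it. -/
theorem aux_meet {X : Type*} [TopologicalSpace X] {f : X → X} {x z : X} {G : Set X}
    (hG : IsOpen G) (hz : z ∈ OmegaLim f {x}) (hzG : z ∈ G) : ∃ n, f^[n] x ∈ G := by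
  obtain ⟨w, hw, h⟩ := mem_closure_iff.1 (mem_iInter.1 hz 0) G hG hzG
  simp only [mem_iUnion] at h
  obtain ⟨m, -, u, hu, rfl⟩ := h
  rw [mem_singleton_iff.1 hu] at hw
  exact ⟨m, hw⟩

theorem aux_shift {X : Type*} [TopologicalSpace X] {f : X → X} {V U : Set X} (n : ℕ)
    (h : f^[n] '' V ⊆ U) : OmegaLim f V ⊆ OmegaLim f U := by
  intro y hy
  refine mem_iInter.2 fun k => ?_
  refine closure_mono ?_ (mem_iInter.1 hy (k + n))
  intro z hz
  simp only [mem_iUnion] at hz ⊢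
  obtain ⟨m, hm, u, hu, rfl⟩ := hz
  refine ⟨m - n, by omega, f^[n] u, h ⟨u, hu, rfl⟩, ?_⟩
  rw [← Function.iterate_add_apply]
  congr 2
  omega

theorem aux_fwd {X : Type*} {f : X → X} {U : Set X} (h : f '' U ⊆ U) (n : ℕ) :
    ∀ x ∈ U, f^[n] x ∈ U := by
  induction n with
  | zero => intro x hx; exact hx
  | succ n ih =>
    intro x hx
    rw [Function.iterate_succ_apply']
    exact h ⟨_, ih x hx, rfl⟩

theorem aux_maxinv_sub {X : Type*} (f : X → X) (U : Set X) : MaxInv f U ⊆ U :=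
  sUnion_subset fun _ h => h.1

theorem aux_maxinv_inv {X : Type*} (f : X → X) (U : Set X) :
    f '' MaxInv f U = MaxInv f U := by
  apply Subset.antisymm
  · rintro _ ⟨y, ⟨S, hS, hy⟩, rfl⟩
    exact ⟨S, hS, hS.2 ▸ mem_image_of_mem f hy⟩
  · rintro y ⟨S, hS, hy⟩
    rw [← hS.2] at hy
    obtain ⟨z, hz, rfl⟩ := hy
    exact ⟨z, ⟨S, hS, hz⟩, rfl⟩

theorem aux_iter {X : Type*} {f : X → X} {S : Set X} (h : f '' S = S) (n : ℕ) :
    f^[n] '' S = S := by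
  induction n with
  | zero => simp
  | succ n ih => rw [Function.iterate_succ, image_comp, h, ih]

/-- An invariant set lies in the omega limit set of any set containing it. -/
theorem aux_sub_omega {X : Type*} [TopologicalSpace X] {f : X → X} {S U : Set X}
    (h : f '' S = S) (hS : S ⊆ U) : S ⊆ OmegaLim f U := by
  intro y hy
  refine mem_iInter.2 fun n => subset_closure ?_
  simp only [mem_iUnion]
  refine ⟨n, le_rfl, ?_⟩
  rw [← aux_iter h n] at hy
  exact image_mono hS hy

theorem aux_attr {X : Type*} [MetricSpace X] [CompactSpace X] {f : X → X} (hf : Continuous f)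
    {A : Set X} (hA : IsAttractor f A) :
    f '' A = A ∧ IsClosed A ∧ ∃ U, f '' U ⊆ U ∧ A ⊆ interior U ∧ OmegaLim f U ⊆ A := by
  obtain ⟨U, ⟨hU, n, hn, hnU⟩, rfl⟩ := hA
  have hinv := aux_maxinv_inv f U
  have h1 : OmegaLim f U ⊆ interior U := by
    intro y hy
    have hy := mem_iInter.1 hy n
    apply hnU
    have hcl : IsClosed (f^[n] '' closure U) :=
      (isClosed_closure.isCompact.image (hf.iterate n)).isClosed
    refine closure_minimal ?_ hcl hy
    intro z hz
    simp only [mem_iUnion] at hz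
    obtain ⟨m, hm, u, hu, rfl⟩ := hz
    refine ⟨f^[m - n] u, subset_closure (aux_fwd hU _ u hu), ?_⟩
    rw [← Function.iterate_add_apply]
    congr 2
    omega
  have h2 : OmegaLim f U ⊆ MaxInv f U :=
    subset_sUnion_of_mem ⟨h1.trans interior_subset, aux_inv hf U⟩
  have h3 : MaxInv f U ⊆ OmegaLim f U := aux_sub_omega hinv (aux_maxinv_sub f U)
  refine ⟨hinv, ?_, U, hU, h3.trans h1, h2⟩
  rw [Subset.antisymm h3 h2]
  exact isClosed_iInter fun n => isClosed_closure

/-- The basin of `A`. -/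
def auxBasin {X : Type*} [TopologicalSpace X] (f : X → X) (A : Set X) : Set X :=
  {x | OmegaLim f {x} ⊆ A}

theorem aux_basin_of_meet {X : Type*} [MetricSpace X] [CompactSpace X] {f : X → X}
    (hf : Continuous f) {A : Set X} (hA : IsAttractor f A) {x z : X}
    (hz : z ∈ OmegaLim f {x}) (hzA : z ∈ A) : x ∈ auxBasin f A := by
  obtain ⟨-, -, U, hU, hAU, hω⟩ := aux_attr hf hA
  obtain ⟨n, hn⟩ := aux_meet isOpen_interior hz (hAU hzA)
  refine (aux_shift n ?_).trans hω
  rintro _ ⟨y, rfl, rfl⟩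
  exact interior_subset hn

theorem aux_sub_basin {X : Type*} [MetricSpace X] [CompactSpace X] {f : X → X}
    (hf : Continuous f) {A : Set X} (hA : IsAttractor f A) : A ⊆ auxBasin f A := by
  obtain ⟨-, -, U, hU, hAU, hω⟩ := aux_attr hf hA
  intro x hx
  refine (aux_shift 0 ?_).trans hω
  rintro _ ⟨y, rfl, rfl⟩
  exact interior_subset (hAU hx)

theorem aux_basin_compact {X : Type*} [MetricSpace X] [CompactSpace X] {f : X → X}
    (hf : Continuous f) {A : Set X} (hA : IsAttractor f A) :
    IsOpen (auxBasin f A) ∧ ∀ K, IsCompact K → K ⊆ auxBasin f A → OmegaLim f K ⊆ A := by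
  obtain ⟨-, -, U, hU, hAU, hω⟩ := aux_attr hf hA
  have key : auxBasin f A = ⋃ n : ℕ, f^[n] ⁻¹' interior U := by
    ext x
    simp only [mem_iUnion, mem_preimage]
    constructor
    · intro hx
      obtain ⟨z, hz⟩ := aux_nonempty f x
      exact aux_meet isOpen_interior hz (hAU (hx hz))
    · rintro ⟨n, hn⟩
      refine (aux_shift n ?_).trans hω
      rintro _ ⟨y, rfl, rfl⟩
      exact interior_subset hn
  have ho : ∀ n : ℕ, IsOpen (f^[n] ⁻¹' interior U) := fun n =>
    isOpen_interior.preimage (hf.iterate n)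
  refine ⟨key ▸ isOpen_iUnion ho, fun K hK hKB => ?_⟩
  rw [key] at hKB
  obtain ⟨t, ht⟩ := hK.elim_finite_subcover _ ho hKB
  refine (aux_shift (t.sup id) ?_).trans hω
  rintro _ ⟨y, hy, rfl⟩
  have := ht hy
  simp only [mem_iUnion, mem_preimage] at this
  obtain ⟨n, hn, h⟩ := this
  have hle : n ≤ t.sup id := Finset.le_sup (f := id) hn
  have h2 := aux_fwd hU (t.sup id - n) _ (interior_subset h)
  rw [← Function.iterate_add_apply] at h2
  rwa [Nat.sub_add_cancel hle] at h2

/-- A finite sublattice of attractors lifts to a lattice of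
attracting neighborhoods. -/
theorem finite_attractor_lattice_lifts
    {X : Type*} [MetricSpace X] [CompactSpace X]
    (f : X → X) (hf : Continuous f)
    (𝒜 : Set (Set X)) (hfin : 𝒜.Finite)
    (hatt : ∀ A ∈ 𝒜, IsAttractor f A)
    (hbot : (∅ : Set X) ∈ 𝒜) (htop : MaxInv f Set.univ ∈ 𝒜)
    (hsup : ∀ A ∈ 𝒜, ∀ A' ∈ 𝒜, A ∪ A' ∈ 𝒜)
    (hinf : ∀ A ∈ 𝒜, ∀ A' ∈ 𝒜, MaxInv f (A ∩ A') ∈ 𝒜) :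
    ∃ k : Set X → Set X,
      (∀ A ∈ 𝒜, IsAttractingNbhd f (k A) ∧ MaxInv f (k A) = A) ∧
      k ∅ = ∅ ∧ k (MaxInv f Set.univ) = Set.univ ∧
      (∀ A ∈ 𝒜, ∀ A' ∈ 𝒜, k (A ∪ A') = k A ∪ k A') ∧
      (∀ A ∈ 𝒜, ∀ A' ∈ 𝒜, k (MaxInv f (A ∩ A')) = k A ∩ k A') ∧
      (∀ A ∈ 𝒜, ∀ A' ∈ 𝒜, k A = k A' → A = A') := by
  classical
  -- the separating neighborhoods
  let W : X → Set X := fun x =>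
    ⋂ A ∈ 𝒜, if x ∈ auxBasin f A then auxBasin f A else Aᶜ
  have hWo : ∀ x, IsOpen (W x) := fun x => by
    refine hfin.isOpen_biInter fun A hA => ?_
    split_ifs
    · exact (aux_basin_compact hf (hatt A hA)).1
    · exact (aux_attr hf (hatt A hA)).2.1.isOpen_compl
  have hxW : ∀ x, x ∈ W x := fun x => by
    refine mem_iInter₂.2 fun A hA => ?_
    split_ifs with h
    · exact h
    · exact fun hx => h (aux_sub_basin hf (hatt A hA) hx)
  have hV : ∀ x, ∃ V : Set X, IsOpen V ∧ x ∈ V ∧ closure V ⊆ W x := fun x => by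
    obtain ⟨V, h1, h2, h3⟩ := (isCompact_singleton (x := x)).exists_isOpen_closure_subset
      ((hWo x).mem_nhdsSet.2 (singleton_subset_iff.2 (hxW x)))
    exact ⟨V, h1, singleton_subset_iff.1 h2, h3⟩
  choose V hVo hxV hVW using hV
  obtain ⟨t, ht⟩ := isCompact_univ.elim_finite_subcover V hVo
    (fun x _ => mem_iUnion.2 ⟨x, hxV x⟩)
  have hg : ∀ y, ∃ x ∈ t, y ∈ V x := fun y => by
    simpa using ht (mem_univ y)
  choose g hgt hgV using hg
  -- closure facts
  have hcl : ∀ P : Set X, closure (g ⁻¹' P) ⊆ ⋃ x ∈ P, W x := fun P => by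
    have h1 : g ⁻¹' P ⊆ ⋃ x ∈ {x ∈ (t : Set X) | x ∈ P}, closure (V x) := fun y hy =>
      mem_iUnion₂.2 ⟨g y, ⟨hgt y, hy⟩, subset_closure (hgV y)⟩
    have h2 := closure_minimal h1 ((t.finite_toSet.subset (sep_subset _ _)).isClosed_biUnion
      fun x _ => isClosed_closure)
    intro y hy
    obtain ⟨x, hx, h⟩ := mem_iUnion₂.1 (h2 hy)
    exact mem_iUnion₂.2 ⟨x, hx.2, hVW x h⟩
  have hclB : ∀ A ∈ 𝒜, closure (g ⁻¹' auxBasin f A) ⊆ auxBasin f A := fun A hA y hy => by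
    obtain ⟨x, hx, h⟩ := mem_iUnion₂.1 (hcl _ hy)
    have := mem_iInter₂.1 h A hA
    rwa [if_pos hx] at this
  have hint : ∀ A ∈ 𝒜, A ⊆ interior (g ⁻¹' auxBasin f A) := fun A hA y hy => by
    by_contra hn
    rw [← mem_compl_iff, ← closure_compl, ← preimage_compl] at hn
    obtain ⟨x, hx, h⟩ := mem_iUnion₂.1 (hcl _ hn)
    have := mem_iInter₂.1 h A hA
    rw [if_neg hx] at this
    exact this hy
  have hom : ∀ A ∈ 𝒜, OmegaLim f (g ⁻¹' auxBasin f A) ⊆ A := fun A hA =>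
    (aux_shift 0 (by simpa using subset_closure)).trans
      ((aux_basin_compact hf (hatt A hA)).2 _ isClosed_closure.isCompact (hclB A hA))
  have hInv : ∀ A ∈ 𝒜, MaxInv f (g ⁻¹' auxBasin f A) = A := fun A hA => by
    apply Subset.antisymm
    · exact (aux_sub_omega (aux_maxinv_inv f _) (aux_maxinv_sub f _)).trans (hom A hA)
    · exact subset_sUnion_of_mem
        ⟨(hint A hA).trans interior_subset, (aux_attr hf (hatt A hA)).1⟩
  refine ⟨fun A => g ⁻¹' auxBasin f A, fun A hA => ⟨(hom A hA).trans (hint A hA), hInv A hA⟩,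
    ?_, ?_, ?_, ?_, ?_⟩
  · refine eq_empty_of_forall_notMem fun y hy => ?_
    obtain ⟨z, hz⟩ := aux_nonempty f (g y)
    exact hy hz
  · refine eq_univ_of_forall fun y => ?_
    exact subset_sUnion_of_mem ⟨subset_univ _, aux_inv hf _⟩
  · intro A hA A' hA'
    ext y
    constructor
    · intro hy
      obtain ⟨z, hz⟩ := aux_nonempty f (g y)
      rcases hy hz with h | h
      · exact Or.inl (aux_basin_of_meet hf (hatt A hA) hz h)
      · exact Or.inr (aux_basin_of_meet hf (hatt A' hA') hz h)
    · rintro (h | h)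
      · exact fun z hz => Or.inl (h hz)
      · exact fun z hz => Or.inr (h hz)
  · intro A hA A' hA'
    ext y
    constructor
    · intro hy
      exact ⟨fun z hz => (aux_maxinv_sub f _ (hy hz)).1,
        fun z hz => (aux_maxinv_sub f _ (hy hz)).2⟩
    · rintro ⟨h, h'⟩
      exact subset_sUnion_of_mem ⟨subset_inter h h', aux_inv hf _⟩
  · intro A hA A' hA' h
    rw [← hInv A hA, ← hInv A' hA']
    exact congrArg _ h
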